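/- Let δ > 0, let G be a group acting by isometries on a δ-hyperbolic geodesic metric space X, let U ⊆ G be a finite subset that is 200δ-reduced at p ∈ X, and let τ ≥ 23δ. Let Y ⊆ X be a subset and suppose there exists a 10³δ-local (1,δ)-quasi-geodesic γ : ℝ → X whose image is contained in Y and such that Y is contained in the 99δ-neighbourhood of the image of γ. Call a word w over U ∪ U⁻¹ a minimal τ-shortening word over Y if w is a τ-shortening word over Y and no proper prefix of w is a τ-shortening word over Y. Then there are at most two minimal τ-shortening words over Y. -/

import Mathlib

/-!
Fix almost-projections `γ (σ x)` of the points `x` to the line `γ`. Since `U` is `200δ`-reduced, a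
reduced word `w` with first and last letters `u`, `v` satisfies
`d(p, wp) ≥ d(up,p)/2 + d(vp,p)/2` (`word_gromov`). For a shortening word the second condition then
forces the projections of `p` and `wp` to `γ` to be at least `100δ` apart, even after
paying for the `99δ`-thickness of `Y`.

Let `w₁`, `w₂` be shortening words whose projections are on the same side of `γ (σ p)`, that of `w₁`
being the nearer one. Local quasi-geodesics are globally almost geodesic
(`quasiGeodesic_gromov`), so a geodesic from `p` to `w₂p` passes close to the projection of `w₁p`
(`gromov_projection_middle`), whence `(p, w₂p)_{w₁p} < d(vp,p)/2` for the last letter `v` of `w₁`.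
On the other hand, if `w₁` is not a prefix of `w₂`, then `w₁⁻¹` and the reduced form of `w₁⁻¹w₂`
both begin with `v⁻¹`, so that `(p, w₂p)_{w₁p} > d(vp,p)/2` (`branch_gromov`). Hence `w₁` is a
prefix of `w₂`, and minimality gives `w₁ = w₂`: there is at most one minimal word on each of the two
sides.
-/

open Pointwise Filter

noncomputable section

universe u v

/-- The Gromov product `(x,y)_t`. -/
def gromov {X : Type*} [MetricSpace X] (x y t : X) : ℝ :=
  (dist x t + dist y t - dist x y) / 2

/-- `X` is `δ`-hyperbolic (four point inequality). -/
def IsDeltaHyperbolic (X : Type*) [MetricSpace X] (δ : ℝ) : Prop :=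
  ∀ x y z t : X, min (gromov x y t) (gromov y z t) - δ ≤ gromov x z t

/-- `X` is a geodesic metric space: any two points are joined by an isometric
embedding of a closed real interval. -/
def IsGeodesicSpace (X : Type*) [MetricSpace X] : Prop :=
  ∀ x y : X, ∃ f : ℝ → X, f 0 = x ∧ f (dist x y) = y ∧
    ∀ s ∈ Set.Icc (0 : ℝ) (dist x y), ∀ t ∈ Set.Icc (0 : ℝ) (dist x y),
      dist (f s) (f t) = |s - t|

/-- The action of `G` on `X` is by isometries. -/
def IsometricAction (G X : Type*) [Group G] [MetricSpace X] [MulAction G X] : Prop :=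
  ∀ g : G, Isometry fun x : X => g • x

/-- The action of `G` on `X` is `(κ,N)`-acylindrical (relative to the
hyperbolicity constant `δ`). -/
def AcylindricalAction (G X : Type*) [Group G] [MetricSpace X] [MulAction G X]
    (δ κ N : ℝ) : Prop :=
  ∀ x y : X, κ ≤ dist x y →
    {g : G | dist (g • x) x ≤ 100 * δ ∧ dist (g • y) y ≤ 100 * δ}.Finite ∧
    ({g : G | dist (g • x) x ≤ 100 * δ ∧ dist (g • y) y ≤ 100 * δ}.ncard : ℝ) ≤ N

/-- `L(U,x)`, the `ℓ^∞`-energy of `U` at `x`. -/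
def energyAt {G X : Type*} [Group G] [MetricSpace X] [MulAction G X]
    (U : Set G) (x : X) : ℝ :=
  sSup ((fun u : G => dist (u • x) x) '' U)

/-- `L(U)`, the `ℓ^∞`-energy of `U`. -/
def energy {G : Type*} (X : Type*) [Group G] [MetricSpace X] [MulAction G X]
    (U : Set G) : ℝ :=
  sInf (Set.range fun x : X => energyAt U x)

/-- The stable translation length `‖g‖^∞`, computed at the point `x` (for an
isometric action, by Fekete's subadditive lemma this infimum equals the limit of
`d(gⁿx,x)/n` and is independent of `x`). -/
def stableLength {G X : Type*} [Group G] [MetricSpace X] [MulAction G X]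
    (g : G) (x : X) : ℝ :=
  ⨅ n : ℕ+, dist ((g ^ (n : ℕ)) • x) x / ((n : ℕ) : ℝ)

/-- `g` is loxodromic for the action on `X`. -/
def IsLoxodromic {G : Type*} (X : Type*) [Group G] [MetricSpace X] [MulAction G X]
    (g : G) : Prop :=
  ∀ x : X, 0 < stableLength g x

/-- The translation length `‖g‖`. -/
def translationLength {G : Type*} (X : Type*) [Group G] [MetricSpace X] [MulAction G X]
    (g : G) : ℝ :=
  sInf (Set.range fun x : X => dist (g • x) x)

/-- The axis of `g`. -/
def axisOf {G X : Type*} [Group G] [MetricSpace X] [MulAction G X]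
    (δ : ℝ) (g : G) : Set X :=
  {x : X | dist (g • x) x ≤ translationLength X g + 8 * δ}

/-- The exponential growth rate `ω(U) = limsup (1/n) log |Uⁿ|`. -/
def growthRate {G : Type*} [Group G] (U : Set G) : ℝ :=
  limsup (fun n : ℕ => Real.log ((U ^ n).ncard : ℝ) / (n : ℝ)) atTop

/-- `S` is `α`-reduced at `p`. -/
def ReducedAt {G X : Type*} [Group G] [MetricSpace X] [MulAction G X]
    (δ α : ℝ) (S : Set G) (p : X) : Prop :=
  S ∩ S⁻¹ = ∅ ∧
  ∀ u₁ ∈ S ∪ S⁻¹, ∀ u₂ ∈ S ∪ S⁻¹, u₁ ≠ u₂ →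
    gromov (u₁ • p) (u₂ • p) p <
      min (dist (u₁ • p) p) (dist (u₂ • p) p) / 2 - α - 50 * δ

/-- A group is virtually cyclic if it has a cyclic subgroup of finite index. -/
def VirtuallyCyclic (H : Type*) [Group H] : Prop :=
  ∃ K : Subgroup H, IsCyclic K ∧ K.FiniteIndex

/-- A group is virtually nilpotent if it has a nilpotent subgroup of finite index. -/
def VirtuallyNilpotent (H : Type*) [Group H] : Prop :=
  ∃ K : Subgroup H, Group.IsNilpotent K ∧ K.FiniteIndex

/-- An `L`-local `(1,δ)`-quasi-geodesic line. -/
def IsLocalQuasiGeodesic {X : Type*} [MetricSpace X] (L δ : ℝ) (γ : ℝ → X) : Prop :=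
  ∀ s t : ℝ, |s - t| ≤ L → dist (γ s) (γ t) ≤ |s - t| ∧ |s - t| ≤ dist (γ s) (γ t) + δ

/-- `Y` is `σ`-quasi-convex. -/
def SigmaQuasiConvex {X : Type*} [MetricSpace X] (σ : ℝ) (Y : Set X) : Prop :=
  ∀ x : X, ∀ y ∈ Y, ∀ y' ∈ Y, Metric.infDist x Y ≤ gromov y y' x + σ

/-- `y` is a `δ`-projection of `x` on `Y`. -/
def IsDProj {X : Type*} [MetricSpace X] (δ : ℝ) (Y : Set X) (x y : X) : Prop :=
  y ∈ Y ∧ dist x y ≤ Metric.infDist x Y + δ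

/-- `l` is a reduced word over `U ∪ U⁻¹`. -/
def IsWordOver {G : Type*} [Group G] (U : Set G) (l : List G) : Prop :=
  (∀ a ∈ l, a ∈ U ∪ U⁻¹) ∧ l.Chain' fun a b => b ≠ a⁻¹

/-- `l` is a `τ`-shortening word over `Y` (relative to `U` and `p`). -/
def IsShorteningWord {G X : Type*} [Group G] [MetricSpace X] [MulAction G X]
    (δ τ : ℝ) (U : Set G) (p : X) (Y : Set X) (l : List G) : Prop :=
  l ≠ [] ∧ IsWordOver U l ∧
  ∃ y₀ y₁ : X, IsDProj δ Y p y₀ ∧ IsDProj δ Y (l.prod • p) y₁ ∧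
    τ < dist y₀ y₁ ∧
    (∀ a ∈ l.head?, dist p y₀ ≤ dist (a • p) p / 2 - 200 * δ) ∧
    (∀ a ∈ l.getLast?, dist (l.prod • p) y₁ ≤ dist (a • p) p / 2 - 200 * δ)

/-- `l` is a `τ`-shortening-free word relative to the family `Ys`. -/
def ShorteningFreeWord {G X : Type*} [Group G] [MetricSpace X] [MulAction G X]
    (δ τ : ℝ) (U : Set G) (p : X) (Ys : Set (Set X)) (l : List G) : Prop :=
  IsWordOver U l ∧
  ∀ Y ∈ Ys, ∀ l₀ l₁ l₂ : List G, l = l₀ ++ l₁ ++ l₂ → ¬ IsShorteningWord δ τ U p Y l₁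

/-- The word length of an element of a free group. -/
def fgNorm {α : Type*} (w : FreeGroup α) : ℕ :=
  letI := Classical.decEq α
  w.toWord.length

/-- `w` is a prefix of `r` in the free group. -/
def FGPrefix {α : Type*} (w r : FreeGroup α) : Prop :=
  fgNorm r = fgNorm w + fgNorm (w⁻¹ * r)

/-- `r'` is a cyclic permutation of `r`. -/
def IsCyclicPerm {α : Type*} (r r' : FreeGroup α) : Prop :=
  ∃ w v : FreeGroup α, r = w * v ∧ fgNorm r = fgNorm w + fgNorm v ∧
    r' = v * w ∧ fgNorm r' = fgNorm v + fgNorm w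

/-- `q` is a piece of the set of relators `R`. -/
def IsPiece {α : Type*} (R : Set (FreeGroup α)) (q : FreeGroup α) : Prop :=
  q ≠ 1 ∧ ∃ r₁ ∈ R, ∃ r₂ ∈ R, r₁ ≠ r₂ ∧ FGPrefix q r₁ ∧ FGPrefix q r₂

/-- `ξ`-uniform uniform exponential growth: every finitely generated subgroup is
either virtually nilpotent or has `ξ`-uniform exponential growth. -/
def UUEG (ξ : ℝ) (Q : Type*) [Group Q] : Prop :=
  ∀ H : Subgroup Q, H.FG →
    (VirtuallyNilpotent H ∨
      ∀ U : Set H, U.Finite → U⁻¹ = U → Subgroup.closure U = ⊤ → ξ < growthRate U)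

/-! ### Gromov products -/

lemma gromov_comm {X : Type*} [MetricSpace X] (x y t : X) : gromov x y t = gromov y x t := by
  unfold gromov
  rw [dist_comm x y]
  ring

lemma gromov_nonneg {X : Type*} [MetricSpace X] (x y t : X) : 0 ≤ gromov x y t := by
  unfold gromov
  have := dist_triangle_right x y t
  linarith

lemma gromov_swap {X : Type*} [MetricSpace X] (x y t : X) :
    gromov x y t = dist y t - gromov x t y := by
  unfold gromov
  rw [dist_comm t y]
  ring

lemma gromov_le_dist {X : Type*} [MetricSpace X] (x y t : X) : gromov x y t ≤ dist y t := by
  have := gromov_nonneg x t y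
  rw [gromov_swap]
  linarith

lemma gromov_le_add {X : Type*} [MetricSpace X] (x y s t : X) :
    gromov x y s ≤ dist s t + gromov x y t := by
  unfold gromov
  have h1 := dist_triangle_right x s t
  have h2 := dist_triangle_right y s t
  linarith

lemma gromov_smul {G X : Type*} [Group G] [MetricSpace X] [MulAction G X]
    (hG : IsometricAction G X) (g : G) (x y t : X) :
    gromov (g • x) (g • y) (g • t) = gromov x y t := by
  unfold gromov
  rw [(hG g).dist_eq, (hG g).dist_eq, (hG g).dist_eq]

/-- The four point inequality in the form in which it is used below: if `(y,z)_t` is larger than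
`(x,z)_t + δ`, it cannot realise the minimum. -/
lemma gromov_le_of_lt {X : Type*} [MetricSpace X] {δ : ℝ} (hX : IsDeltaHyperbolic X δ)
    {x y z t : X} {c : ℝ} (h : gromov x z t ≤ c) (h' : c + δ < gromov y z t) :
    gromov x y t ≤ c + δ := by
  have h0 := hX x y z t
  rcases min_choice (gromov x y t) (gromov y z t) with h1 | h1 <;> rw [h1] at h0 <;> linarith

/-! ### Local quasi-geodesics -/

lemma IsLocalQuasiGeodesic.comp_neg {X : Type*} [MetricSpace X] {L δ : ℝ} {γ : ℝ → X}
    (h : IsLocalQuasiGeodesic L δ γ) : IsLocalQuasiGeodesic L δ (fun t => γ (-t)) := by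
  intro s t hst
  have : |-s - -t| = |s - t| := by
    rw [← abs_neg]
    congr 1
    ring
  have h1 := h (-s) (-t) (this ▸ hst)
  rwa [this] at h1

lemma local_dist {X : Type*} [MetricSpace X] {L δ : ℝ} {γ : ℝ → X}
    (h : IsLocalQuasiGeodesic L δ γ) {s t : ℝ} (hst : s ≤ t) (hL : t - s ≤ L) :
    dist (γ s) (γ t) ≤ t - s ∧ t - s ≤ dist (γ s) (γ t) + δ := by
  have := h t s (by rwa [abs_of_nonneg (by linarith)])
  rwa [abs_of_nonneg (by linarith), dist_comm] at this

lemma local_gromov {X : Type*} [MetricSpace X] {L δ : ℝ} {γ : ℝ → X}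
    (h : IsLocalQuasiGeodesic L δ γ) {s r t : ℝ} (hsr : s ≤ r) (hrt : r ≤ t) (hL : t - s ≤ L) :
    gromov (γ s) (γ t) (γ r) ≤ δ / 2 := by
  have h1 := local_dist h hsr (by linarith)
  have h2 := local_dist h hrt (by linarith)
  have h3 := local_dist h (hsr.trans hrt) hL
  unfold gromov
  rw [dist_comm (γ t) (γ r)]
  linarith

/-- Three points in order on the line, the last two at bounded distance: the middle one is almost
on a geodesic joining the outer ones. The induction moves `r` towards `s` by steps of `250δ`. -/
lemma quasiGeodesic_gromov_aux {X : Type*} [MetricSpace X] {δ : ℝ} {γ : ℝ → X} (hδ : 0 < δ)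
    (hX : IsDeltaHyperbolic X δ) (h : IsLocalQuasiGeodesic (10 ^ 3 * δ) δ γ) (n : ℕ) :
    ∀ s r t : ℝ, s ≤ r → r ≤ t → r - s ≤ n * (250 * δ) → t - r ≤ 500 * δ →
      gromov (γ s) (γ t) (γ r) ≤ 3 / 2 * δ := by
  induction n with
  | zero =>
    intro s r t hsr hrt hn ht
    simp only [Nat.cast_zero, zero_mul] at hn
    have := local_gromov h hsr hrt (by linarith)
    linarith
  | succ n ih =>
    intro s r t hsr hrt hn ht
    push_cast at hn
    rcases le_or_gt (r - s) (500 * δ) with hc | hc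
    · have := local_gromov h hsr hrt (by linarith)
      linarith
    · have h1 := ih s (r - 250 * δ) r (by linarith) (by linarith) (by linarith) (by linarith)
      have h2 := local_gromov h (s := r - 250 * δ) (r := r) (t := t) (by linarith) hrt
        (by linarith)
      have h3 := local_dist h (s := r - 250 * δ) (t := r) (by linarith) (by linarith)
      have h4 := gromov_swap (γ s) (γ (r - 250 * δ)) (γ r)
      rw [gromov_comm] at h2
      rw [gromov_comm]
      have := gromov_le_of_lt hX (y := γ s) h2 (by linarith)
      linarith

/-- A local quasi-geodesic is globally almost geodesic: for `s ≤ r ≤ t` the point `γ r` is close to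
any geodesic from `γ s` to `γ t`. -/
lemma quasiGeodesic_gromov {X : Type*} [MetricSpace X] {δ : ℝ} {γ : ℝ → X} (hδ : 0 < δ)
    (hX : IsDeltaHyperbolic X δ) (h : IsLocalQuasiGeodesic (10 ^ 3 * δ) δ γ) {s r t : ℝ}
    (hsr : s ≤ r) (hrt : r ≤ t) : gromov (γ s) (γ t) (γ r) ≤ 5 / 2 * δ := by
  have key : ∀ (γ : ℝ → X), IsLocalQuasiGeodesic (10 ^ 3 * δ) δ γ → ∀ s r t : ℝ, s ≤ r → r ≤ t →
      t - r ≤ 500 * δ → gromov (γ s) (γ t) (γ r) ≤ 3 / 2 * δ := by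
    intro γ h s r t hsr hrt ht
    obtain ⟨n, hn⟩ := exists_nat_ge ((r - s) / (250 * δ))
    rw [div_le_iff₀ (by linarith)] at hn
    exact quasiGeodesic_gromov_aux hδ hX h n s r t hsr hrt hn ht
  rcases le_or_gt (t - r) (500 * δ) with hc | hc
  · have := key γ h s r t hsr hrt hc
    linarith
  · have h1 := key γ h s r (r + 250 * δ) hsr (by linarith) (by linarith)
    have h2 := key _ h.comp_neg (-t) (-(r + 250 * δ)) (-r) (by linarith) (by linarith)
      (by linarith)
    simp only [neg_neg] at h2
    have h3 := local_dist h (s := r) (t := r + 250 * δ) (by linarith) (by linarith)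
    have h4 := gromov_swap (γ t) (γ (r + 250 * δ)) (γ r)
    rw [dist_comm] at h4
    have := gromov_le_of_lt hX (y := γ t) h1 (by linarith)
    linarith

lemma projection_gromov_aux {X : Type*} [MetricSpace X] {δ : ℝ} {γ : ℝ → X} (hδ : 0 < δ)
    (hX : IsDeltaHyperbolic X δ) (h : IsLocalQuasiGeodesic (10 ^ 3 * δ) δ γ) {x : X} {s : ℝ}
    (hs : ∀ t, dist x (γ s) ≤ dist x (γ t) + δ) {t : ℝ} (hst : s ≤ t) :
    gromov x (γ t) (γ s) ≤ 20 * δ := by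
  rcases le_or_gt (t - s) (20 * δ) with hc | hc
  · have h1 := gromov_le_dist x (γ t) (γ s)
    have h2 := local_dist h hst (by linarith)
    rw [dist_comm] at h1
    linarith
  · -- Were the product large, moving `20δ` along the line from `γ s` would get closer to `x`.
    have h1 := quasiGeodesic_gromov hδ hX h (s := s) (r := s + 20 * δ) (t := t) (by linarith)
      (by linarith)
    have h2 := local_dist h (s := s) (t := s + 20 * δ) (by linarith) (by linarith)
    have h3 := hs (s + 20 * δ)
    have h4 : gromov x (γ (s + 20 * δ)) (γ s) ≤ 21 / 2 * δ := by
      unfold gromov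
      rw [dist_comm (γ (s + 20 * δ)) (γ s)]
      linarith
    have h5 := gromov_swap (γ t) (γ (s + 20 * δ)) (γ s)
    rw [gromov_comm (γ t) (γ s), dist_comm] at h5
    have := gromov_le_of_lt hX (y := γ t) h4 (by linarith)
    linarith

/-- A geodesic from `x` to a point of the line passes close to the projection of `x`. -/
lemma projection_gromov {X : Type*} [MetricSpace X] {δ : ℝ} {γ : ℝ → X} (hδ : 0 < δ)
    (hX : IsDeltaHyperbolic X δ) (h : IsLocalQuasiGeodesic (10 ^ 3 * δ) δ γ) {x : X} {s : ℝ}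
    (hs : ∀ t, dist x (γ s) ≤ dist x (γ t) + δ) (t : ℝ) :
    gromov x (γ t) (γ s) ≤ 20 * δ := by
  rcases le_total s t with hc | hc
  · exact projection_gromov_aux hδ hX h hs hc
  · have := projection_gromov_aux hδ hX h.comp_neg (x := x) (s := -s) (t := -t)
      (fun t => by simpa using hs (-t)) (by linarith)
    simpa using this

lemma exists_projection {X : Type*} [MetricSpace X] {δ : ℝ} (γ : ℝ → X) (hδ : 0 < δ) (x : X) :
    ∃ s, ∀ t, dist x (γ s) ≤ dist x (γ t) + δ := by
  have h1 : Metric.infDist x (Set.range γ) < Metric.infDist x (Set.range γ) + δ := by linarith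
  obtain ⟨_, ⟨s, rfl⟩, hs⟩ := (Metric.infDist_lt_iff (Set.range_nonempty γ)).1 h1
  refine ⟨s, fun t => ?_⟩
  have := Metric.infDist_le_dist_of_mem (x := x) (Set.mem_range_self (f := γ) t)
  linarith

/-- If the projections `γ s₀`, `γ s₁`, `γ s₂` of `x₀`, `x₁`, `x₂` occur in this order on the line,
the first two far apart, then a geodesic from `x₀` to `x₂` passes close to `γ s₁`. -/
lemma gromov_projection_middle {X : Type*} [MetricSpace X] {δ : ℝ} {γ : ℝ → X} (hδ : 0 < δ)
    (hX : IsDeltaHyperbolic X δ) (h : IsLocalQuasiGeodesic (10 ^ 3 * δ) δ γ) {x₀ x₂ : X}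
    {s₀ s₁ s₂ : ℝ} (h₀ : ∀ t, dist x₀ (γ s₀) ≤ dist x₀ (γ t) + δ)
    (h₂ : ∀ t, dist x₂ (γ s₂) ≤ dist x₂ (γ t) + δ) (h01 : s₀ ≤ s₁) (h12 : s₁ ≤ s₂)
    (hd1 : 100 * δ ≤ dist (γ s₀) (γ s₁)) (hd2 : 100 * δ ≤ dist (γ s₀) (γ s₂)) :
    gromov x₀ x₂ (γ s₁) ≤ 46 * δ := by
  rcases le_or_gt (dist (γ s₁) (γ s₂)) (25 * δ) with hc | hc
  · have h1 := projection_gromov hδ hX h h₂ s₀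
    have h2 := projection_gromov hδ hX h h₀ s₂
    have h3 := gromov_swap x₀ (γ s₀) (γ s₂)
    have h4 := gromov_le_of_lt hX (y := x₀) h1 (by linarith)
    have h5 := gromov_le_add x₂ x₀ (γ s₁) (γ s₂)
    rw [gromov_comm]
    linarith
  · have h1 := quasiGeodesic_gromov hδ hX h h01 h12
    have h2 := projection_gromov hδ hX h h₀ s₁
    have h3 := gromov_swap x₀ (γ s₀) (γ s₁)
    rw [gromov_comm] at h1
    have h4 := gromov_le_of_lt hX (y := x₀) h1 (by linarith)
    have h5 := projection_gromov hδ hX h h₂ s₁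
    have h6 := gromov_swap x₂ (γ s₂) (γ s₁)
    rw [dist_comm] at h6
    rw [gromov_comm] at h4
    have := gromov_le_of_lt hX (y := x₂) h4 (by linarith)
    linarith

/-! ### Words over a reduced set -/

lemma inv_mem_letters {G : Type*} [Group G] {U : Set G} {a : G} (ha : a ∈ U ∪ U⁻¹) :
    a⁻¹ ∈ U ∪ U⁻¹ := by
  rcases ha with h | h
  · exact Or.inr (by simpa using h)
  · exact Or.inl h

lemma letter_length {G X : Type*} [Group G] [MetricSpace X] [MulAction G X] {δ : ℝ} {p : X}
    {U : Set G} (hU : ReducedAt δ (200 * δ) U p) {a : G}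
    (ha : a ∈ U ∪ U⁻¹) : 500 * δ < dist (a • p) p := by
  have hne : a ≠ a⁻¹ := by
    intro h
    have h1 : a ∈ U ∧ a ∈ U⁻¹ := by
      rcases ha with h' | h'
      · exact ⟨h', by rw [Set.mem_inv, ← h]; exact h'⟩
      · exact ⟨by rw [h]; exact h', h'⟩
    have h2 : a ∈ U ∩ U⁻¹ := h1
    rw [hU.1] at h2
    exact h2
  have h1 := hU.2 a ha _ (inv_mem_letters ha) hne
  have h2 := gromov_nonneg (a • p) (a⁻¹ • p) p
  have h3 := min_le_left (dist (a • p) p) (dist (a⁻¹ • p) p)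
  linarith

/-- A reduced word with first letter `u` moves `p` in the direction of `u • p`, beyond the midpoint
of `p` and `u • p`. The displacement is at least that of half of the first and half of the last
letter. -/
lemma word_gromov {G X : Type*} [Group G] [MetricSpace X] [MulAction G X] {δ : ℝ} (hδ : 0 < δ)
    (hX : IsDeltaHyperbolic X δ) (hG : IsometricAction G X) {p : X} {U : Set G}
    (hU : ReducedAt δ (200 * δ) U p) (v : List G) : ∀ u : G, IsWordOver U (u :: v) →
      dist (u • p) p / 2 + 249 * δ ≤ gromov (u • p) ((u :: v).prod • p) p ∧
      ∀ a ∈ (u :: v).getLast?,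
        dist (u • p) p / 2 + dist (a • p) p / 2 ≤ dist ((u :: v).prod • p) p := by
  induction v with
  | nil =>
    intro u hw
    have h1 := letter_length hU (hw.1 u (by simp))
    constructor
    · simp only [List.prod_cons, List.prod_nil, mul_one]
      unfold gromov
      rw [dist_self]
      linarith
    · intro a ha
      simp only [List.getLast?_singleton, Option.mem_def, Option.some.injEq] at ha
      subst ha
      simp
  | cons u₂ v ih =>
    intro u hw
    obtain ⟨hmem, hchain⟩ := hw
    have hc : u₂ ≠ u⁻¹ ∧ (u₂ :: v).IsChain fun a b => b ≠ a⁻¹ := List.isChain_cons_cons.1 hchain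
    obtain ⟨h1, h2⟩ := ih u₂ ⟨fun a ha => hmem a (List.mem_cons_of_mem _ ha), hc.2⟩
    have h3 := hU.2 u₂ (hmem u₂ (by simp)) u⁻¹ (inv_mem_letters (hmem u (by simp))) hc.1
    have hinv : dist (u⁻¹ • p) p = dist (u • p) p := by
      rw [← (hG u).dist_eq (u⁻¹ • p) p, smul_inv_smul, dist_comm]
    rw [hinv] at h3
    have hm1 := min_le_left (dist (u₂ • p) p) (dist (u • p) p)
    have hm2 := min_le_right (dist (u₂ • p) p) (dist (u • p) p)
    rw [gromov_comm] at h1 h3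
    have h4 := gromov_le_of_lt hX (y := (u₂ :: v).prod • p) h3.le (by linarith)
    rw [← gromov_smul hG u, smul_inv_smul, smul_smul, ← List.prod_cons] at h4
    constructor
    · rw [gromov_comm, gromov_swap, gromov_comm _ p]
      linarith
    · intro a ha
      have h5 := h2 a (by simpa using ha)
      rw [← (hG u).dist_eq ((u₂ :: v).prod • p), smul_smul, ← List.prod_cons] at h5
      unfold gromov at h4
      rw [dist_comm p ((u :: u₂ :: v).prod • p), dist_comm p (u • p)] at h4
      linarith

/-- The word representing the inverse of the group element represented by `l`. -/
def invWord {G : Type*} [Group G] (l : List G) : List G := (l.map fun a => a⁻¹).reverse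

lemma invWord_prod {G : Type*} [Group G] (l : List G) : (invWord l).prod = l.prod⁻¹ :=
  (List.prod_inv_reverse l).symm

lemma isWordOver_invWord {G : Type*} [Group G] {U : Set G} {l : List G} (h : IsWordOver U l) :
    IsWordOver U (invWord l) := by
  refine ⟨fun a ha => ?_, ?_⟩
  · simp only [invWord, List.mem_reverse, List.mem_map] at ha
    obtain ⟨b, hb, rfl⟩ := ha
    exact inv_mem_letters (h.1 b hb)
  · have h2 : l.IsChain fun a b => b ≠ a⁻¹ := h.2
    show (invWord l).IsChain _
    rw [invWord, List.isChain_reverse, List.isChain_map]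
    refine h2.imp fun a b hab => ?_
    intro h'
    exact hab (by rw [h']; simp)

lemma prefix_or_branch {G : Type*} (l₁ l₂ : List G) : l₁ <+: l₂ ∨ ∃ w v₁ v₂ : List G,
    l₁ = w ++ v₁ ∧ l₂ = w ++ v₂ ∧ v₁ ≠ [] ∧ ∀ a ∈ v₁.head?, ∀ b ∈ v₂.head?, a ≠ b := by
  induction l₁ generalizing l₂ with
  | nil => exact Or.inl (List.nil_prefix)
  | cons a l₁ ih =>
    rcases l₂ with _ | ⟨b, l₂⟩
    · exact Or.inr ⟨[], a :: l₁, [], by simp, by simp, by simp, by simp⟩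
    · by_cases hab : a = b
      · subst hab
        rcases ih l₂ with h | ⟨w, v₁, v₂, h1, h2, h3, h4⟩
        · exact Or.inl ((List.prefix_cons_inj a).2 h)
        · exact Or.inr ⟨a :: w, v₁, v₂, by simp [h1], by simp [h2], h3, h4⟩
      · exact Or.inr ⟨[], a :: l₁, b :: l₂, by simp, by simp, by simp, by simpa using hab⟩

/-- If `l₁` is not a prefix of `l₂`, then seen from `l₁.prod • p` both `p` and `l₂.prod • p` lie
behind the midpoint of the last letter of `l₁`. -/
lemma branch_gromov {G X : Type*} [Group G] [MetricSpace X] [MulAction G X] {δ : ℝ} (hδ : 0 < δ)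
    (hX : IsDeltaHyperbolic X δ) (hG : IsometricAction G X) {p : X} {U : Set G}
    (hU : ReducedAt δ (200 * δ) U p) {l₁ l₂ : List G} (h₁ : IsWordOver U l₁)
    (h₂ : IsWordOver U l₂) (hpre : ¬ l₁ <+: l₂) :
    ∃ a ∈ l₁.getLast?,
      dist (a • p) p / 2 + 248 * δ ≤ gromov p (l₂.prod • p) (l₁.prod • p) := by
  obtain ⟨w, v₁, v₂, rfl, rfl, hne, hhead⟩ := (prefix_or_branch l₁ l₂).resolve_left hpre
  obtain ⟨v, a, rfl⟩ := List.eq_nil_or_concat' v₁ |>.resolve_left hne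
  refine ⟨a, by simp, ?_⟩
  have hl₁ : (w ++ (v ++ [a])).IsChain fun a b => b ≠ a⁻¹ := h₁.2
  have hl₂ : (w ++ v₂).IsChain fun a b => b ≠ a⁻¹ := h₂.2
  have hv₁ : IsWordOver U (v ++ [a]) :=
    ⟨fun b hb => h₁.1 b (List.mem_append_right _ hb), (List.isChain_append.1 hl₁).2.1⟩
  have hv₂ : IsWordOver U v₂ :=
    ⟨fun b hb => h₂.1 b (List.mem_append_right _ hb), (List.isChain_append.1 hl₂).2.1⟩
  have hA : IsWordOver U (a⁻¹ :: (invWord v ++ invWord w)) := by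
    have := isWordOver_invWord h₁
    simpa [invWord] using this
  have hB : IsWordOver U (a⁻¹ :: (invWord v ++ v₂)) := by
    have hi := isWordOver_invWord hv₁
    have e : a⁻¹ :: (invWord v ++ v₂) = invWord (v ++ [a]) ++ v₂ := by simp [invWord]
    rw [e]
    refine ⟨fun b hb => ?_, List.isChain_append.2 ⟨hi.2, hv₂.2, ?_⟩⟩
    · rcases List.mem_append.1 hb with hb | hb
      · exact hi.1 b hb
      · exact hv₂.1 b hb
    · intro x hx y hy hxy
      simp only [invWord, List.getLast?_reverse, List.head?_map, Option.mem_def,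
        Option.map_eq_some_iff] at hx
      obtain ⟨c, hc, rfl⟩ := hx
      exact hhead c hc y hy (by rw [hxy, inv_inv])
  have gA := (word_gromov hδ hX hG hU _ _ hA).1
  have gB := (word_gromov hδ hX hG hU _ _ hB).1
  have pA : (a⁻¹ :: (invWord v ++ invWord w)).prod = (w ++ (v ++ [a])).prod⁻¹ := by
    simp [invWord_prod, mul_assoc]
  have pB : (a⁻¹ :: (invWord v ++ v₂)).prod = (w ++ (v ++ [a])).prod⁻¹ * (w ++ v₂).prod := by
    simp [invWord_prod, mul_assoc]
  rw [pA] at gA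
  rw [pB] at gB
  have hinv : dist (a⁻¹ • p) p = dist (a • p) p := by
    rw [← (hG a).dist_eq (a⁻¹ • p) p, smul_inv_smul, dist_comm]
  rw [hinv] at gA gB
  set g := (w ++ (v ++ [a])).prod
  set k := (w ++ v₂).prod
  rw [← gromov_smul hG g⁻¹, inv_smul_smul, smul_smul]
  have h0 := hX (g⁻¹ • p) (a⁻¹ • p) ((g⁻¹ * k) • p) p
  rw [gromov_comm] at gA
  have := le_min gA gB
  linarith

/-! ### Shortening words on one side of the projection of `p` -/

/-- If the projections of two shortening words lie on the same side of the projection of `p`,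
the nearer one is a prefix of the farther one. -/
lemma prefix_of_le {G X : Type*} [Group G] [MetricSpace X] [MulAction G X] {δ τ : ℝ} (hδ : 0 < δ)
    (hX : IsDeltaHyperbolic X δ) (hG : IsometricAction G X) {p : X} {U : Set G}
    (hU : ReducedAt δ (200 * δ) U p) {Y : Set X} {γ : ℝ → X}
    (h : IsLocalQuasiGeodesic (10 ^ 3 * δ) δ γ)
    (hY : Y ⊆ Metric.cthickening (99 * δ) (Set.range γ)) {l₁ l₂ : List G}
    (hl₁ : IsShorteningWord δ τ U p Y l₁) (hl₂ : IsShorteningWord δ τ U p Y l₂) {s₀ s₁ s₂ : ℝ}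
    (h₀ : ∀ t, dist p (γ s₀) ≤ dist p (γ t) + δ)
    (h₁ : ∀ t, dist (l₁.prod • p) (γ s₁) ≤ dist (l₁.prod • p) (γ t) + δ)
    (h₂ : ∀ t, dist (l₂.prod • p) (γ s₂) ≤ dist (l₂.prod • p) (γ t) + δ)
    (h01 : s₀ ≤ s₁) (h12 : s₁ ≤ s₂) : l₁ <+: l₂ := by
  have hproj : ∀ x y s, y ∈ Y → (∀ t, dist x (γ s) ≤ dist x (γ t) + δ) →
      dist x (γ s) ≤ dist x y + 101 * δ := by
    intro x y s hy hs
    have h1 : y ∈ Metric.thickening (100 * δ) (Set.range γ) :=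
      Metric.cthickening_subset_thickening' (by linarith) (by linarith) _ (hY hy)
    obtain ⟨_, ⟨t, rfl⟩, ht⟩ := Metric.mem_thickening_iff.1 h1
    have h3 := hs t
    have h4 := dist_triangle x y (γ t)
    linarith
  have hend : ∀ l s, IsShorteningWord δ τ U p Y l →
      (∀ t, dist (l.prod • p) (γ s) ≤ dist (l.prod • p) (γ t) + δ) →
      (∀ a ∈ l.getLast?, dist (l.prod • p) (γ s) ≤ dist (a • p) p / 2 - 99 * δ) ∧
        100 * δ ≤ dist (γ s₀) (γ s) := by
    rintro l s ⟨hne, hw, y₀, y₁, hy₀, hy₁, -, hhead, hlast⟩ hs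
    have hq₁ := hproj _ y₁ s hy₁.1 hs
    refine ⟨fun a ha => by linarith [hlast a ha], ?_⟩
    rcases l with _ | ⟨u, v⟩
    · exact absurd rfl hne
    have hu := hhead u (by simp)
    have ha : (u :: v).getLast (by simp) ∈ (u :: v).getLast? := by
      rw [List.getLast?_eq_some_getLast (by simp)]
      rfl
    have hb := hlast _ ha
    have hd := (word_gromov hδ hX hG hU v u hw).2 _ ha
    have hq₀ := hproj p y₀ s₀ hy₀.1 h₀
    have ht := dist_triangle4 p (γ s₀) (γ s) ((u :: v).prod • p)
    rw [dist_comm p ((u :: v).prod • p), dist_comm (γ s) ((u :: v).prod • p)] at ht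
    linarith
  obtain ⟨e₁, d₁⟩ := hend l₁ s₁ hl₁ h₁
  obtain ⟨-, d₂⟩ := hend l₂ s₂ hl₂ h₂
  by_contra hpre
  obtain ⟨a, ha, hlt⟩ := branch_gromov hδ hX hG hU hl₁.2.1 hl₂.2.1 hpre
  have hm := gromov_projection_middle hδ hX h h₀ h₂ h01 h12 d₁ d₂
  have := gromov_le_add p (l₂.prod • p) (l₁.prod • p) (γ s₁)
  have := e₁ a ha
  linarith

/-- A `τ`-shortening word without proper `τ`-shortening prefix. -/
def IsMinimalShorteningWord {G X : Type*} [Group G] [MetricSpace X] [MulAction G X]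
    (δ τ : ℝ) (U : Set G) (p : X) (Y : Set X) (l : List G) : Prop :=
  IsShorteningWord δ τ U p Y l ∧
    ∀ l' : List G, l' <+: l → 0 < l'.length → l'.length < l.length →
      ¬ IsShorteningWord δ τ U p Y l'

lemma eq_of_minimal_of_prefix {G X : Type*} [Group G] [MetricSpace X] [MulAction G X] {δ τ : ℝ}
    {p : X} {U : Set G} {Y : Set X} {l₁ l₂ : List G} (h₁ : IsMinimalShorteningWord δ τ U p Y l₁)
    (h₂ : IsMinimalShorteningWord δ τ U p Y l₂) (hpre : l₁ <+: l₂) : l₁ = l₂ := by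
  by_contra hne
  have hlt : l₁.length < l₂.length :=
    lt_of_le_of_ne hpre.length_le fun h => hne (hpre.eq_of_length h)
  exact h₂.2 l₁ hpre (List.length_pos_iff.2 h₁.1.1) hlt h₁.1

/-- There is at most one minimal shortening word whose projection is on the right of that of
`p`. -/
lemma eq_of_minimal_of_right {G X : Type*} [Group G] [MetricSpace X] [MulAction G X] {δ τ : ℝ}
    (hδ : 0 < δ) (hX : IsDeltaHyperbolic X δ) (hG : IsometricAction G X) {p : X} {U : Set G}
    (hU : ReducedAt δ (200 * δ) U p) {Y : Set X} {γ : ℝ → X}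
    (h : IsLocalQuasiGeodesic (10 ^ 3 * δ) δ γ)
    (hY : Y ⊆ Metric.cthickening (99 * δ) (Set.range γ)) {l₁ l₂ : List G}
    (hl₁ : IsMinimalShorteningWord δ τ U p Y l₁) (hl₂ : IsMinimalShorteningWord δ τ U p Y l₂)
    {s₀ s₁ s₂ : ℝ} (h₀ : ∀ t, dist p (γ s₀) ≤ dist p (γ t) + δ)
    (h₁ : ∀ t, dist (l₁.prod • p) (γ s₁) ≤ dist (l₁.prod • p) (γ t) + δ)
    (h₂ : ∀ t, dist (l₂.prod • p) (γ s₂) ≤ dist (l₂.prod • p) (γ t) + δ)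
    (h01 : s₀ ≤ s₁) (h02 : s₀ ≤ s₂) : l₁ = l₂ := by
  rcases le_total s₁ s₂ with hc | hc
  · exact eq_of_minimal_of_prefix hl₁ hl₂
      (prefix_of_le hδ hX hG hU h hY hl₁.1 hl₂.1 h₀ h₁ h₂ h01 hc)
  · exact (eq_of_minimal_of_prefix hl₂ hl₁
      (prefix_of_le hδ hX hG hU h hY hl₂.1 hl₁.1 h₀ h₂ h₁ h02 hc)).symm

/-- there are at most two minimal shortening words over a
cylinder-like subset `Y`. -/
theorem two_minimal_shortening_words :
    ∀ (G : Type u) [Group G] (X : Type v) [MetricSpace X] [MulAction G X],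
    ∀ δ : ℝ, 0 < δ →
      IsDeltaHyperbolic X δ → IsGeodesicSpace X → IsometricAction G X →
      ∀ (p : X) (U : Set G), U.Finite → ReducedAt δ (200 * δ) U p →
      ∀ τ : ℝ, 23 * δ ≤ τ →
      ∀ Y : Set X,
        (∃ γ : ℝ → X, IsLocalQuasiGeodesic (10 ^ 3 * δ) δ γ ∧
          Set.range γ ⊆ Y ∧ Y ⊆ Metric.cthickening (99 * δ) (Set.range γ)) →
        ∃ l₁ l₂ : List G, ∀ l : List G,
          IsShorteningWord δ τ U p Y l →
          (∀ l' : List G, l' <+: l → 0 < l'.length → l'.length < l.length →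
            ¬ IsShorteningWord δ τ U p Y l') →
          l = l₁ ∨ l = l₂ := by
  intro G _ X _ _ δ hδ hX _ hG p U _ hU τ _ Y hγ
  obtain ⟨γ, h, -, hY⟩ := hγ
  choose σ hσ using exists_projection (X := X) γ hδ
  have hneg : Set.range (fun t => γ (-t)) = Set.range γ :=
    (Equiv.neg ℝ).surjective.range_comp γ
  have hσ' : ∀ x t, dist x (γ (- -σ x)) ≤ dist x (γ (-t)) + δ := fun x t => by
    rw [neg_neg]
    exact hσ x (-t)
  have right : ∀ l l' : List G, IsMinimalShorteningWord δ τ U p Y l →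
      IsMinimalShorteningWord δ τ U p Y l' → σ p ≤ σ (l.prod • p) → σ p ≤ σ (l'.prod • p) →
      l = l' := fun l l' hl hl' hs₁ hs₂ =>
    eq_of_minimal_of_right hδ hX hG hU h hY hl hl' (hσ _) (hσ _) (hσ _) hs₁ hs₂
  -- The left side is the right side of the reversed line.
  have left : ∀ l l' : List G, IsMinimalShorteningWord δ τ U p Y l →
      IsMinimalShorteningWord δ τ U p Y l' → σ (l.prod • p) ≤ σ p → σ (l'.prod • p) ≤ σ p →
      l = l' := fun l l' hl hl' hs hs' =>
    eq_of_minimal_of_right hδ hX hG hU h.comp_neg (by rwa [hneg]) hl hl' (hσ' _) (hσ' _) (hσ' _)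
      (neg_le_neg hs) (neg_le_neg hs')
  have pick : ∀ P : List G → Prop, (∀ l l', P l → P l' → l = l') → ∃ m, ∀ l, P l → l = m := by
    intro P hP
    by_cases hex : ∃ m, P m
    · obtain ⟨m, hm⟩ := hex
      exact ⟨m, fun l hl => hP l m hl hm⟩
    · exact ⟨[], fun l hl => absurd ⟨l, hl⟩ hex⟩
  obtain ⟨m₁, hm₁⟩ := pick
    (fun l => IsMinimalShorteningWord δ τ U p Y l ∧ σ p ≤ σ (l.prod • p))
    fun l l' hl hl' => right l l' hl.1 hl'.1 hl.2 hl'.2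
  obtain ⟨m₂, hm₂⟩ := pick
    (fun l => IsMinimalShorteningWord δ τ U p Y l ∧ σ (l.prod • p) ≤ σ p)
    fun l l' hl hl' => left l l' hl.1 hl'.1 hl.2 hl'.2
  refine ⟨m₁, m₂, fun l hl hmin => ?_⟩
  rcases le_total (σ p) (σ (l.prod • p)) with hc | hc
  · exact Or.inl (hm₁ l ⟨⟨hl, hmin⟩, hc⟩)
  · exact Or.inr (hm₂ l ⟨⟨hl, hmin⟩, hc⟩)
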